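/- arXiv:1001.0960 — 3 statements merged into one kernel-verified Lean document; each statement's English description precedes it below -/
import Mathlib

section
/- For any event sequence ω(0), ω(1), …, any end time t_end > 0, any initial queue states Z_l(0) ≥ 0, Q_k(0) ≥ 0, H_m(0) ∈ ℝ, and any sequence of control decisions α(t) ∈ A_{ω(t)} with auxiliary vectors γ(t) ∈ X satisfying x_m^min ≤ γ_m(t) ≤ x_m^max, the time averages over the first t_end slots satisfy: (i) ā_k ≤ b̄_k + (Q_k(t_end) − Q_k(0))/t_end for every k ∈ {1,…,K}; (ii) ȳ_l + g_l(x̄) ≤ (Z_l(t_end) − Z_l(0))/t_end + Σ_{m=1}^M β_{l,m}|H_m(t_end) − H_m(0)|/t_end for every l ∈ {1,…,L}; and (iii) there exists a vector ε ∈ ℝ^M with |ε_m| = |H_m(t_end) − H_m(0)|/t_end for each m such that x̄ + ε ∈ X. -/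
/-!
Each queue increment dominates the net amount added to the queue in that slot (with equality for the
sign-free queues `H`), so summing over the slots telescopes and bounds time averages by the total
queue change. In particular the averages of `γ` and `x` differ by exactly `(H n - H 0) / n`:
convexity of `X` puts the average of `γ` in `X`, while Jensen's inequality at the average of `γ`
followed by the Lipschitz-type bound moves `g` to the average of `x`.
-/

section TimeAverages

open Finset
open scoped BigOperators

variable {𝕜 E ι : Type*} [Field 𝕜] [LinearOrder 𝕜] [IsStrictOrderedRing 𝕜]
  [AddCommGroup E] [Module 𝕜 E] [Module ℚ≥0 E]

section Convexity

variable {F : Type*} [AddCommGroup F] [Module 𝕜 F] [Module ℚ≥0 F]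
  [PartialOrder F] [IsOrderedAddMonoid F] [IsStrictOrderedModule 𝕜 F] {s : Finset ι} {C : Set E}

theorem expect_eq_centerMass_one (R : Type*) [Field R] [CharZero R] [Module R E]
    (s : Finset ι) (f : ι → E) : 𝔼 i ∈ s, f i = s.centerMass (fun _ ↦ (1 : R)) f := by
  simp [expect, centerMass, ← NNRat.cast_smul_eq_nnqsmul R]

theorem expect_mem_of_convex {f : ι → E} (hC : Convex 𝕜 C) (hs : s.Nonempty)
    (hf : ∀ i ∈ s, f i ∈ C) : 𝔼 i ∈ s, f i ∈ C := by
  rw [expect_eq_centerMass_one 𝕜]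
  exact hC.centerMass_mem (fun _ _ ↦ zero_le_one) (by simpa using hs) hf

theorem map_expect_le_of_convexOn {f : ι → E} {g : E → F} (hg : ConvexOn 𝕜 C g)
    (hs : s.Nonempty) (hf : ∀ i ∈ s, f i ∈ C) : g (𝔼 i ∈ s, f i) ≤ 𝔼 i ∈ s, g (f i) := by
  rw [expect_eq_centerMass_one 𝕜, expect_eq_centerMass_one 𝕜]
  exact hg.map_centerMass_le (fun _ _ ↦ zero_le_one) (by simpa using hs) hf

theorem map_expect_le_expect_add_of_convexOn {g p : E → F} {x γ : ι → E} (hg : ConvexOn 𝕜 C g)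
    (hp : ∀ u v, u ∈ C → u + v ∈ C → g (u + v) ≤ g u + p v) (hs : s.Nonempty)
    (hx : ∀ i ∈ s, x i ∈ C) (hγ : ∀ i ∈ s, γ i ∈ C) :
    g (𝔼 i ∈ s, x i) ≤ 𝔼 i ∈ s, g (γ i) + p (𝔼 i ∈ s, x i - 𝔼 i ∈ s, γ i) := by
  set xbar := 𝔼 i ∈ s, x i
  set γbar := 𝔼 i ∈ s, γ i
  have hxbar : γbar + (xbar - γbar) ∈ C := by
    simpa only [add_sub_cancel] using expect_mem_of_convex hg.1 hs hx
  calc g xbar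
      = g (γbar + (xbar - γbar)) := by rw [add_sub_cancel]
    _ ≤ g γbar + p (xbar - γbar) := hp _ _ (expect_mem_of_convex hg.1 hs hγ) hxbar
    _ ≤ 𝔼 i ∈ s, g (γ i) + p (xbar - γbar) := by
      gcongr
      exact map_expect_le_of_convexOn hg hs hγ

end Convexity

section Queues

theorem expect_range_succ_sub (u : ℕ → E) (n : ℕ) :
    𝔼 t ∈ range n, (u (t + 1) - u t) = (n : ℚ≥0)⁻¹ • (u n - u 0) := by
  rw [expect, sum_range_sub, card_range]

theorem expect_range_sub_of_succ_eq {H γ x : ℕ → E} (hH : ∀ t, H (t + 1) = H t + γ t - x t)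
    (n : ℕ) :
    𝔼 t ∈ range n, γ t - 𝔼 t ∈ range n, x t = (n : ℚ≥0)⁻¹ • (H n - H 0) := by
  rw [← expect_range_succ_sub, ← expect_sub_distrib]
  exact expect_congr rfl fun t _ ↦ by rw [hH]; abel

theorem expect_range_le_div_of_le_succ_sub {f u : ℕ → 𝕜} (h : ∀ t, f t ≤ u (t + 1) - u t)
    (n : ℕ) : 𝔼 t ∈ range n, f t ≤ (u n - u 0) / n :=
  calc 𝔼 t ∈ range n, f t
      ≤ 𝔼 t ∈ range n, (u (t + 1) - u t) := expect_le_expect fun t _ ↦ h t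
    _ = (u n - u 0) / n := by
      simp [expect_range_succ_sub, NNRat.smul_def, div_eq_inv_mul]

theorem expect_arrivals_le_of_succ_eq_max {Q a b : ℕ → 𝕜}
    (hQ : ∀ t, Q (t + 1) = max (Q t - b t) 0 + a t) (n : ℕ) :
    𝔼 t ∈ range n, a t ≤ 𝔼 t ∈ range n, b t + (Q n - Q 0) / n := by
  have hinc (t : ℕ) : a t - b t ≤ Q (t + 1) - Q t := by
    linarith [hQ t, le_max_left (Q t - b t) 0]
  have havg := expect_range_le_div_of_le_succ_sub hinc n
  rwa [expect_sub_distrib, sub_le_iff_le_add'] at havg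

theorem expect_range_le_div_of_succ_eq_max {Z f : ℕ → 𝕜}
    (hZ : ∀ t, Z (t + 1) = max (Z t + f t) 0) (n : ℕ) :
    𝔼 t ∈ range n, f t ≤ (Z n - Z 0) / n :=
  expect_range_le_div_of_le_succ_sub
    (fun t ↦ by linarith [hZ t, le_max_left (Z t + f t) 0]) n

theorem expect_add_map_expect_le_of_succ_eq_max {C : Set E} {g p : E → 𝕜} {y Z : ℕ → 𝕜}
    {x γ : ℕ → E} (hg : ConvexOn 𝕜 C g)
    (hp : ∀ u v, u ∈ C → u + v ∈ C → g (u + v) ≤ g u + p v)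
    (hx : ∀ t, x t ∈ C) (hγ : ∀ t, γ t ∈ C)
    (hZ : ∀ t, Z (t + 1) = max (Z t + y t + g (γ t)) 0) {n : ℕ} (hn : 0 < n) :
    𝔼 t ∈ range n, y t + g (𝔼 t ∈ range n, x t)
      ≤ (Z n - Z 0) / n + p (𝔼 t ∈ range n, x t - 𝔼 t ∈ range n, γ t) := by
  have hdrift : 𝔼 t ∈ range n, y t + 𝔼 t ∈ range n, g (γ t) ≤ (Z n - Z 0) / n := by
    rw [← expect_add_distrib]
    exact expect_range_le_div_of_succ_eq_max (fun t ↦ by rw [hZ, add_assoc]) n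
  have hjensen := map_expect_le_expect_add_of_convexOn hg hp (nonempty_range_iff.2 hn.ne')
    (fun t _ ↦ hx t) (fun t _ ↦ hγ t)
  linarith

end Queues

theorem expect_eq_fun_sum_div_card {K α : Type*} [Semifield K] [CharZero K] (s : Finset ι)
    (f : ι → α → K) : 𝔼 i ∈ s, f i = fun m ↦ (∑ i ∈ s, f i m) / #s := by
  ext m
  rw [expect_apply, expect_eq_sum_div_card]

theorem stmt_0_general {κ μ : Type*} [Fintype ι] {a b Q : κ → ℕ → 𝕜} {y Z : μ → ℕ → 𝕜}
    {x γ H : ℕ → ι → 𝕜} {X C : Set (ι → 𝕜)} {g : μ → (ι → 𝕜) → 𝕜} {β : μ → ι → 𝕜}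
    (hX : Convex 𝕜 X) (hg : ∀ l, ConvexOn 𝕜 C (g l))
    (hlip : ∀ l u v, u ∈ C → u + v ∈ C → g l (u + v) ≤ g l u + ∑ m, β l m * |v m|)
    (hx : ∀ t, x t ∈ C) (hγX : ∀ t, γ t ∈ X) (hγC : ∀ t, γ t ∈ C)
    (hQ : ∀ k t, Q k (t + 1) = max (Q k t - b k t) 0 + a k t)
    (hZ : ∀ l t, Z l (t + 1) = max (Z l t + y l t + g l (γ t)) 0)
    (hH : ∀ t, H (t + 1) = H t + γ t - x t) {n : ℕ} (hn : 0 < n) :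
    (∀ k, 𝔼 t ∈ range n, a k t ≤ 𝔼 t ∈ range n, b k t + (Q k n - Q k 0) / n) ∧
    (∀ l, 𝔼 t ∈ range n, y l t + g l (𝔼 t ∈ range n, x t)
      ≤ (Z l n - Z l 0) / n + ∑ m, β l m * |H n m - H 0 m| / n) ∧
    ∃ ε : ι → 𝕜, (∀ m, |ε m| = |H n m - H 0 m| / n) ∧ (𝔼 t ∈ range n, x t) + ε ∈ X := by
  set xbar := 𝔼 t ∈ range n, x t
  set γbar := 𝔼 t ∈ range n, γ t
  have hgap (m : ι) : |(γbar - xbar) m| = |H n m - H 0 m| / n := by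
    rw [expect_range_sub_of_succ_eq hH]
    simp [← NNRat.cast_smul_eq_nnqsmul 𝕜, abs_mul, div_eq_inv_mul]
  refine ⟨fun k ↦ expect_arrivals_le_of_succ_eq_max (hQ k) n, fun l ↦ ?_, γbar - xbar, hgap, ?_⟩
  · have hp : ∑ m, β l m * |(xbar - γbar) m| = ∑ m, β l m * |H n m - H 0 m| / n :=
      sum_congr rfl fun m _ ↦ by
        rw [← neg_sub, Pi.neg_apply, abs_neg, hgap, mul_div_assoc]
    exact hp ▸ expect_add_map_expect_le_of_succ_eq_max (p := fun v ↦ ∑ m, β l m * |v m|)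
      (hg l) (hlip l) hx hγC (hZ l) hn
  · rw [add_sub_cancel]
    exact expect_mem_of_convex hX (nonempty_range_iff.2 hn.ne') fun t _ ↦ hγX t

end TimeAverages

/-- Lemma 1 (Approximate Constraint Satisfaction): for any event sequence, end time
`t_end > 0`, initial queue states, and any feasible control/auxiliary decisions, the
time averages over the first `t_end` slots satisfy (i) `ā_k ≤ b̄_k + (Q_k(t_end)-Q_k(0))/t_end`,
(ii) `ȳ_l + g_l(x̄) ≤ (Z_l(t_end)-Z_l(0))/t_end + Σ_m β_{l,m}|H_m(t_end)-H_m(0)|/t_end`,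
and (iii) there is `ε` with `|ε_m| = |H_m(t_end)-H_m(0)|/t_end` and `x̄ + ε ∈ X`. -/
theorem stmt_0
    {Ω Act : Type*} (ω : ℕ → Ω) (A : Ω → Set Act) (hAne : ∀ w, (A w).Nonempty)
    (K M L : ℕ) (hK : 0 < K) (hM : 0 < M) (hL : 0 < L)
    (ahat bhat : Fin K → Act → Ω → ℝ)
    (xhat : Fin M → Act → Ω → ℝ)
    (yhat : Fin L → Act → Ω → ℝ)
    (amax bmax : Fin K → ℝ) (xmin xmax : Fin M → ℝ) (ymin ymax : Fin L → ℝ)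
    -- Assumption A1 (boundedness)
    (hA1a : ∀ (w : Ω) (a' : Act), a' ∈ A w → ∀ k, 0 ≤ ahat k a' w ∧ ahat k a' w ≤ amax k)
    (hA1b : ∀ (w : Ω) (a' : Act), a' ∈ A w → ∀ k, 0 ≤ bhat k a' w ∧ bhat k a' w ≤ bmax k)
    (hA1x : ∀ (w : Ω) (a' : Act), a' ∈ A w → ∀ m, xmin m ≤ xhat m a' w ∧ xhat m a' w ≤ xmax m)
    (hA1y : ∀ (w : Ω) (a' : Act), a' ∈ A w → ∀ l, ymin l ≤ yhat l a' w ∧ yhat l a' w ≤ ymax l)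
    -- the convex set X and the cost functions g_l on the box
    (X : Set (Fin M → ℝ)) (hX : Convex ℝ X)
    (g : Fin L → (Fin M → ℝ) → ℝ) (β : Fin L → Fin M → ℝ)
    (hβ : ∀ l m, 0 ≤ β l m)
    (hgconv : ∀ l, ConvexOn ℝ {x : Fin M → ℝ | ∀ m, xmin m ≤ x m ∧ x m ≤ xmax m} (g l))
    (hgcont : ∀ l, ContinuousOn (g l) {x : Fin M → ℝ | ∀ m, xmin m ≤ x m ∧ x m ≤ xmax m})
    (hglip : ∀ (l : Fin L) (x y : Fin M → ℝ),
      (∀ m, xmin m ≤ x m ∧ x m ≤ xmax m) →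
      (∀ m, xmin m ≤ x m + y m ∧ x m + y m ≤ xmax m) →
      g l (x + y) ≤ g l x + ∑ m, β l m * |y m|)
    -- the policy: control actions and auxiliary vectors
    (α : ℕ → Act) (γ : ℕ → Fin M → ℝ)
    (hα : ∀ t, α t ∈ A (ω t))
    (hγX : ∀ t, γ t ∈ X)
    (hγbox : ∀ t m, xmin m ≤ γ t m ∧ γ t m ≤ xmax m)
    -- queues and their update equations
    (Q : Fin K → ℕ → ℝ) (Z : Fin L → ℕ → ℝ) (H : Fin M → ℕ → ℝ)
    (hQ0 : ∀ k, 0 ≤ Q k 0) (hZ0 : ∀ l, 0 ≤ Z l 0)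
    (hQ : ∀ k t, Q k (t + 1) = max (Q k t - bhat k (α t) (ω t)) 0 + ahat k (α t) (ω t))
    (hZ : ∀ l t, Z l (t + 1) = max (Z l t + yhat l (α t) (ω t) + g l (γ t)) 0)
    (hH : ∀ m t, H m (t + 1) = H m t + γ t m - xhat m (α t) (ω t))
    (tend : ℕ) (htend : 0 < tend) :
    (∀ k, (∑ τ ∈ Finset.range tend, ahat k (α τ) (ω τ)) / tend
        ≤ (∑ τ ∈ Finset.range tend, bhat k (α τ) (ω τ)) / tend
          + (Q k tend - Q k 0) / tend) ∧
    (∀ l, (∑ τ ∈ Finset.range tend, yhat l (α τ) (ω τ)) / tend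
        + g l (fun m => (∑ τ ∈ Finset.range tend, xhat m (α τ) (ω τ)) / tend)
        ≤ (Z l tend - Z l 0) / tend
          + ∑ m, β l m * |H m tend - H m 0| / tend) ∧
    (∃ ε : Fin M → ℝ, (∀ m, |ε m| = |H m tend - H m 0| / tend) ∧
      ((fun m => (∑ τ ∈ Finset.range tend, xhat m (α τ) (ω τ)) / tend) + ε) ∈ X) := by
  simpa only [expect_eq_fun_sum_div_card, Finset.expect_eq_sum_div_card, Finset.card_range] using
    stmt_0_general (H := fun t m ↦ H m t) hX hgconv hglip (fun t m ↦ hA1x _ _ (hα t) m) hγX hγbox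
      hQ hZ (fun t ↦ funext fun m ↦ hH m t) htend
end

section
/- Suppose Assumptions A1 and A2 hold, V > 0, and a C-approximate policy is run against an arbitrary event sequence ω(0), ω(1), ω(2), …. Then for every slot t > 0: Σ_{l=1}^L Z_l(t)² + Σ_{k=1}^K Q_k(t)² + Σ_{m=1}^M H_m(t)² ≤ tVC₀² + 2L(Θ(0)), where C₀ = √(2[(B + C)/V + (y₀^max − y₀^min) + (f^max − f^min)]). In particular, Z_l(t), Q_k(t), and |H_m(t)| are each at most √(tVC₀² + 2L(Θ(0))), and at most C₀√(tV) if all queues are initially zero. -/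
/-- The "drift-plus-penalty" expression `E_t(α,γ)` whose (approximate) per-slot
minimization defines the universal scheduling algorithm. -/
noncomputable def driftExpr {Act Ω : Type*} {K M L : ℕ}
    (ahat bhat : Fin K → Act → Ω → ℝ) (xhat : Fin M → Act → Ω → ℝ)
    (y0hat : Act → Ω → ℝ) (yhat : Fin L → Act → Ω → ℝ)
    (g : Fin L → (Fin M → ℝ) → ℝ) (f : (Fin M → ℝ) → ℝ) (V : ℝ)
    (w : Ω) (Zv : Fin L → ℝ) (Qv : Fin K → ℝ) (Hv : Fin M → ℝ)
    (a : Act) (γ : Fin M → ℝ) : ℝ :=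
  V * y0hat a w + V * f γ
    + ∑ l, Zv l * (yhat l a w + g l γ)
    + ∑ k, Qv k * (ahat k a w - bhat k a w)
    + ∑ m, Hv m * (γ m - xhat m a w)

/-! The squared size of all queues grows by a bounded amount per slot. Up to the constant `B`, one
slot changes `L(Θ)` by at most a linear form in the queues, which is exactly the part of `E_t` that
is not penalty. The slack decision `(α'_ω, x̂(α'_ω, ω))` of Assumption A2 makes this form
nonpositive, since its `H`-part vanishes and the other terms pair nonnegative queues with
nonpositive net inputs. A `C`-approximate decision does as well up to `C` and the oscillation
`V * ((y₀^max - y₀^min) + (f^max - f^min))` of the penalty, so `L(Θ(t))` grows at most linearly. -/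

section ScalarQueues

variable {R : Type*} [CommRing R] [LinearOrder R] [IsStrictOrderedRing R]

lemma sq_max_zero_le (x : R) : max x 0 ^ 2 ≤ x ^ 2 := by
  rcases le_total x 0 with hx | hx
  · rw [max_eq_right hx, zero_pow two_ne_zero]; exact sq_nonneg x
  · rw [max_eq_left hx]

lemma sq_max_add_zero_le (z y : R) : max (z + y) 0 ^ 2 ≤ z ^ 2 + y ^ 2 + 2 * (z * y) :=
  (sq_max_zero_le _).trans_eq (by ring)

lemma sq_max_sub_zero_add_le {q a b : R} (hq : 0 ≤ q) (ha : 0 ≤ a) (hb : 0 ≤ b) :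
    (max (q - b) 0 + a) ^ 2 ≤ q ^ 2 + (b ^ 2 + a ^ 2) + 2 * (q * (a - b)) := by
  have hmax : max (q - b) 0 ≤ q := max_le (sub_le_self q hb) hq
  calc (max (q - b) 0 + a) ^ 2
      = max (q - b) 0 ^ 2 + 2 * (a * max (q - b) 0) + a ^ 2 := by ring
    _ ≤ (q - b) ^ 2 + 2 * (a * q) + a ^ 2 := by gcongr ?_ + 2 * (a * ?_) + _; exact sq_max_zero_le _
    _ = q ^ 2 + (b ^ 2 + a ^ 2) + 2 * (q * (a - b)) := by ring

end ScalarQueues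

lemma le_add_nsmul_of_succ_le {M : Type*} [AddMonoid M] [Preorder M] [AddRightMono M]
    {u : ℕ → M} {c : M} (h : ∀ t, u (t + 1) ≤ u t + c) (t : ℕ) : u t ≤ u 0 + t • c := by
  induction t with
  | zero => rw [zero_nsmul, add_zero]
  | succ t ih =>
    calc u (t + 1) ≤ u t + c := h t
      _ ≤ u 0 + t • c + c := by gcongr
      _ = u 0 + (t + 1) • c := by rw [succ_nsmul, add_assoc]

lemma mul_sq_sqrt_two_mul_div_add {V E P : ℝ} (hV : 0 < V) (hE : 0 ≤ E) (hP : 0 ≤ P) :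
    V * √(2 * (E / V + P)) ^ 2 = 2 * (E + V * P) := by
  rw [Real.sq_sqrt (by positivity)]
  field_simp

section Lyapunov

variable {ι κ μ : Type*} [Fintype ι] [Fintype κ] [Fintype μ]

/-- The Lyapunov function `L(Θ)` of the queue state `Θ = (Z, Q, H)`: half the squared size of all
queues. -/
noncomputable def lyapunov (Z : ι → ℝ) (Q : κ → ℝ) (H : μ → ℝ) : ℝ :=
  (1 / 2) * ∑ l, Z l ^ 2 + (1 / 2) * ∑ k, Q k ^ 2 + (1 / 2) * ∑ m, H m ^ 2

/-- The drift-plus-penalty expression of a single slot in terms of realized quantities: the weighted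
penalty `v` (standing for `V * y₀ + V * f(γ)`) plus the pairings of the queues `Z`, `Q`, `H` with
their net inputs `y`, `d`, `h`. Evaluated at the inputs produced by a decision `(α, γ)` it is
definitionally `driftExpr`, but with arbitrary finite index types. -/
noncomputable def driftPlusPenalty (v : ℝ) (Z y : ι → ℝ) (Q d : κ → ℝ) (H h : μ → ℝ) : ℝ :=
  v + ∑ l, Z l * y l + ∑ k, Q k * d k + ∑ m, H m * h m

lemma two_mul_lyapunov (Z : ι → ℝ) (Q : κ → ℝ) (H : μ → ℝ) :
    2 * lyapunov Z Q H = ∑ l, Z l ^ 2 + ∑ k, Q k ^ 2 + ∑ m, H m ^ 2 := by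
  unfold lyapunov
  ring

lemma abs_le_sqrt_of_two_mul_lyapunov_le {Z : ι → ℝ} {Q : κ → ℝ} {H : μ → ℝ} {r : ℝ}
    (hr : 2 * lyapunov Z Q H ≤ r) :
    (∀ l, |Z l| ≤ √r) ∧ (∀ k, |Q k| ≤ √r) ∧ ∀ m, |H m| ≤ √r := by
  rw [two_mul_lyapunov] at hr
  have hZ : 0 ≤ ∑ l, Z l ^ 2 := by positivity
  have hQ : 0 ≤ ∑ k, Q k ^ 2 := by positivity
  have hH : 0 ≤ ∑ m, H m ^ 2 := by positivity
  refine ⟨fun l => Real.abs_le_sqrt ?_, fun k => Real.abs_le_sqrt ?_,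
    fun m => Real.abs_le_sqrt ?_⟩
  · linarith [Finset.single_le_sum (fun i _ => sq_nonneg (Z i)) (Finset.mem_univ l)]
  · linarith [Finset.single_le_sum (fun i _ => sq_nonneg (Q i)) (Finset.mem_univ k)]
  · linarith [Finset.single_le_sum (fun i _ => sq_nonneg (H i)) (Finset.mem_univ m)]

lemma abs_le_mul_sqrt_of_two_mul_lyapunov_le {Z : ι → ℝ} {Q : κ → ℝ} {H : μ → ℝ} {x c : ℝ}
    (hx : 0 ≤ x) (hc : 0 ≤ c) (h : 2 * lyapunov Z Q H ≤ x * c ^ 2) :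
    (∀ l, |Z l| ≤ c * √x) ∧ (∀ k, |Q k| ≤ c * √x) ∧ ∀ m, |H m| ≤ c * √x := by
  have hsqrt : √(x * c ^ 2) = c * √x := by rw [Real.sqrt_mul hx, Real.sqrt_sq hc, mul_comm]
  simpa only [hsqrt] using abs_le_sqrt_of_two_mul_lyapunov_le h

lemma queue_bounds_of_two_mul_lyapunov_le {Z Z₀ : ι → ℝ} {Q Q₀ : κ → ℝ} {H H₀ : μ → ℝ} {x c : ℝ}
    (hx : 0 ≤ x) (hc : 0 ≤ c)
    (h : 2 * lyapunov Z Q H ≤ x * c ^ 2 + 2 * lyapunov Z₀ Q₀ H₀) :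
    ∑ l, Z l ^ 2 + ∑ k, Q k ^ 2 + ∑ m, H m ^ 2 ≤ x * c ^ 2 + 2 * lyapunov Z₀ Q₀ H₀ ∧
      (∀ l, Z l ≤ √(x * c ^ 2 + 2 * lyapunov Z₀ Q₀ H₀)) ∧
      (∀ k, Q k ≤ √(x * c ^ 2 + 2 * lyapunov Z₀ Q₀ H₀)) ∧
      (∀ m, |H m| ≤ √(x * c ^ 2 + 2 * lyapunov Z₀ Q₀ H₀)) ∧
      (((∀ l, Z₀ l = 0) ∧ (∀ k, Q₀ k = 0) ∧ (∀ m, H₀ m = 0)) →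
        (∀ l, Z l ≤ c * √x) ∧ (∀ k, Q k ≤ c * √x) ∧ (∀ m, |H m| ≤ c * √x)) := by
  obtain ⟨hZ, hQ, hH⟩ := abs_le_sqrt_of_two_mul_lyapunov_le h
  refine ⟨two_mul_lyapunov Z Q H ▸ h, fun l => (le_abs_self _).trans (hZ l),
    fun k => (le_abs_self _).trans (hQ k), hH, fun ⟨hZ₀, hQ₀, hH₀⟩ => ?_⟩
  have hlyap₀ : lyapunov Z₀ Q₀ H₀ = 0 := by simp [lyapunov, hZ₀, hQ₀, hH₀]
  rw [hlyap₀, mul_zero, add_zero] at h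
  obtain ⟨hZ, hQ, hH⟩ := abs_le_mul_sqrt_of_two_mul_lyapunov_le hx hc h
  exact ⟨fun l => (le_abs_self _).trans (hZ l), fun k => (le_abs_self _).trans (hQ k), hH⟩

lemma lyapunov_next_add_penalty_le {Z y : ι → ℝ} {Q a b : κ → ℝ} {H h : μ → ℝ} (v : ℝ)
    (hQ : ∀ k, 0 ≤ Q k) (ha : ∀ k, 0 ≤ a k) (hb : ∀ k, 0 ≤ b k) :
    lyapunov (fun l => max (Z l + y l) 0) (fun k => max (Q k - b k) 0 + a k)
        (fun m => H m + h m) + v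
      ≤ lyapunov Z Q H
        + ((1 / 2) * ∑ l, y l ^ 2 + (1 / 2) * ∑ k, (b k ^ 2 + a k ^ 2) + (1 / 2) * ∑ m, h m ^ 2)
        + driftPlusPenalty v Z y Q (fun k => a k - b k) H h := by
  have hZsum := Finset.sum_le_sum fun l (_ : l ∈ Finset.univ) => sq_max_add_zero_le (Z l) (y l)
  have hQsum := Finset.sum_le_sum fun k (_ : k ∈ Finset.univ) =>
    sq_max_sub_zero_add_le (hQ k) (ha k) (hb k)
  have hHsum : ∑ m, (H m + h m) ^ 2 = ∑ m, (H m ^ 2 + h m ^ 2 + 2 * (H m * h m)) :=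
    Finset.sum_congr rfl fun m _ => by ring
  rw [Finset.sum_add_distrib, Finset.sum_add_distrib, ← Finset.mul_sum] at hZsum hQsum hHsum
  unfold lyapunov driftPlusPenalty
  linarith

lemma driftPlusPenalty_le_penalty {v : ℝ} {Z y : ι → ℝ} {Q d : κ → ℝ} {H h : μ → ℝ}
    (hZ : ∀ l, 0 ≤ Z l) (hQ : ∀ k, 0 ≤ Q k) (hy : ∀ l, y l ≤ 0) (hd : ∀ k, d k ≤ 0)
    (hh : ∀ m, h m = 0) : driftPlusPenalty v Z y Q d H h ≤ v := by
  have hZy : ∑ l, Z l * y l ≤ 0 :=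
    Finset.sum_nonpos fun l _ => mul_nonpos_of_nonneg_of_nonpos (hZ l) (hy l)
  have hQd : ∑ k, Q k * d k ≤ 0 :=
    Finset.sum_nonpos fun k _ => mul_nonpos_of_nonneg_of_nonpos (hQ k) (hd k)
  have hHh : ∑ m, H m * h m = 0 := Finset.sum_eq_zero fun m _ => by rw [hh, mul_zero]
  unfold driftPlusPenalty
  linarith

lemma lyapunov_le_of_driftPlusPenalty_le {Z y : ι → ℕ → ℝ} {Q a b : κ → ℕ → ℝ} {H h : μ → ℕ → ℝ}
    {v : ℕ → ℝ} {B D : ℝ} (hQnonneg : ∀ k t, 0 ≤ Q k t)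
    (ha : ∀ k t, 0 ≤ a k t) (hb : ∀ k t, 0 ≤ b k t)
    (hZ : ∀ l t, Z l (t + 1) = max (Z l t + y l t) 0)
    (hQ : ∀ k t, Q k (t + 1) = max (Q k t - b k t) 0 + a k t)
    (hH : ∀ m t, H m (t + 1) = H m t + h m t)
    (hB : ∀ t, (1 / 2) * ∑ l, y l t ^ 2 + (1 / 2) * ∑ k, (b k t ^ 2 + a k t ^ 2)
      + (1 / 2) * ∑ m, h m t ^ 2 ≤ B)
    (hD : ∀ t, driftPlusPenalty (v t) (Z · t) (y · t) (Q · t) (fun k => a k t - b k t)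
      (H · t) (h · t) ≤ v t + D) (t : ℕ) :
    lyapunov (Z · t) (Q · t) (H · t) ≤ lyapunov (Z · 0) (Q · 0) (H · 0) + t * (B + D) := by
  rw [← nsmul_eq_mul]
  refine le_add_nsmul_of_succ_le
    (u := fun s => lyapunov (Z · s) (Q · s) (H · s)) (fun s => ?_) t
  have hdrift := lyapunov_next_add_penalty_le (Z := (Z · s)) (y := (y · s)) (H := (H · s))
    (h := (h · s)) (v s) (hQnonneg · s) (ha · s) (hb · s)
  simp only [hZ, hQ, hH]
  linarith [hB s, hD s]

end Lyapunov

theorem stmt_3_general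
    {Ω Act ι κ μ : Type*} [Fintype ι] [Fintype κ] [Fintype μ] (ω : ℕ → Ω) (A : Ω → Set Act)
    (ahat bhat : κ → Act → Ω → ℝ) (xhat : μ → Act → Ω → ℝ)
    (y0hat : Act → Ω → ℝ) (yhat : ι → Act → Ω → ℝ) (y0min y0max : ℝ)
    (ha : ∀ w, ∀ a' ∈ A w, ∀ k, 0 ≤ ahat k a' w) (hb : ∀ w, ∀ a' ∈ A w, ∀ k, 0 ≤ bhat k a' w)
    (hy0 : ∀ w, ∀ a' ∈ A w, y0hat a' w ∈ Set.Icc y0min y0max)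
    (X : Set (μ → ℝ)) (f : (μ → ℝ) → ℝ) (g : ι → (μ → ℝ) → ℝ) (fmin fmax : ℝ)
    (hf : ∀ x ∈ X, f x ∈ Set.Icc fmin fmax)
    (hslack : ∀ t, ∃ a' ∈ A (ω t),
      (∀ l, yhat l a' (ω t) + g l (xhat · a' (ω t)) ≤ 0) ∧
      (∀ k, ahat k a' (ω t) ≤ bhat k a' (ω t)) ∧ (xhat · a' (ω t)) ∈ X)
    (V C B : ℝ) (hV : 0 < V)
    (hB : ∀ t, ∀ a' ∈ A (ω t), ∀ γ' ∈ X,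
      (1 / 2) * ∑ l, (yhat l a' (ω t) + g l γ') ^ 2
        + (1 / 2) * ∑ k, (bhat k a' (ω t) ^ 2 + ahat k a' (ω t) ^ 2)
        + (1 / 2) * ∑ m, (γ' m - xhat m a' (ω t)) ^ 2 ≤ B)
    (α : ℕ → Act) (γ : ℕ → μ → ℝ) (hα : ∀ t, α t ∈ A (ω t)) (hγ : ∀ t, γ t ∈ X)
    (Q : κ → ℕ → ℝ) (Z : ι → ℕ → ℝ) (H : μ → ℕ → ℝ)
    (hQ0 : ∀ k, 0 ≤ Q k 0) (hZ0 : ∀ l, 0 ≤ Z l 0)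
    (hQ : ∀ k t, Q k (t + 1) = max (Q k t - bhat k (α t) (ω t)) 0 + ahat k (α t) (ω t))
    (hZ : ∀ l t, Z l (t + 1) = max (Z l t + yhat l (α t) (ω t) + g l (γ t)) 0)
    (hH : ∀ m t, H m (t + 1) = H m t + γ t m - xhat m (α t) (ω t))
    (happrox : ∀ t, ∀ a' ∈ A (ω t), ∀ γ' ∈ X,
      driftPlusPenalty (V * y0hat (α t) (ω t) + V * f (γ t))
          (Z · t) (fun l => yhat l (α t) (ω t) + g l (γ t))
          (Q · t) (fun k => ahat k (α t) (ω t) - bhat k (α t) (ω t))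
          (H · t) (fun m => γ t m - xhat m (α t) (ω t))
        ≤ driftPlusPenalty (V * y0hat a' (ω t) + V * f γ')
          (Z · t) (fun l => yhat l a' (ω t) + g l γ')
          (Q · t) (fun k => ahat k a' (ω t) - bhat k a' (ω t))
          (H · t) (fun m => γ' m - xhat m a' (ω t)) + C)
    (C₀ : ℝ) (hC₀ : C₀ = √(2 * ((B + C) / V + (y0max - y0min) + (fmax - fmin)))) (t : ℕ) :
    ∑ l, Z l t ^ 2 + ∑ k, Q k t ^ 2 + ∑ m, H m t ^ 2
        ≤ t * V * C₀ ^ 2 + 2 * lyapunov (Z · 0) (Q · 0) (H · 0) ∧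
      (∀ l, Z l t ≤ √(t * V * C₀ ^ 2 + 2 * lyapunov (Z · 0) (Q · 0) (H · 0))) ∧
      (∀ k, Q k t ≤ √(t * V * C₀ ^ 2 + 2 * lyapunov (Z · 0) (Q · 0) (H · 0))) ∧
      (∀ m, |H m t| ≤ √(t * V * C₀ ^ 2 + 2 * lyapunov (Z · 0) (Q · 0) (H · 0))) ∧
      (((∀ l, Z l 0 = 0) ∧ (∀ k, Q k 0 = 0) ∧ (∀ m, H m 0 = 0)) →
        (∀ l, Z l t ≤ C₀ * √(t * V)) ∧ (∀ k, Q k t ≤ C₀ * √(t * V)) ∧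
        (∀ m, |H m t| ≤ C₀ * √(t * V))) := by
  have hZnonneg : ∀ l t, 0 ≤ Z l t
    | l, 0 => hZ0 l
    | l, t + 1 => hZ l t ▸ le_max_right _ _
  have hQnonneg : ∀ k t, 0 ≤ Q k t
    | k, 0 => hQ0 k
    | k, t + 1 => hQ k t ▸ add_nonneg (le_max_right _ _) (ha _ _ (hα t) k)
  have hpenalty : ∀ s, driftPlusPenalty (V * y0hat (α s) (ω s) + V * f (γ s))
      (Z · s) (fun l => yhat l (α s) (ω s) + g l (γ s))
      (Q · s) (fun k => ahat k (α s) (ω s) - bhat k (α s) (ω s))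
      (H · s) (fun m => γ s m - xhat m (α s) (ω s))
      ≤ V * y0hat (α s) (ω s) + V * f (γ s) + (C + V * (y0max - y0min + (fmax - fmin))) := by
    intro s
    obtain ⟨a', ha', hy', hab', hx'⟩ := hslack s
    have hslackE := driftPlusPenalty_le_penalty (v := V * y0hat a' (ω s) + V * f (xhat · a' (ω s)))
      (H := (H · s)) (hZnonneg · s) (hQnonneg · s) hy' (fun k => sub_nonpos.mpr (hab' k))
      (fun m => sub_self (xhat m a' (ω s)))
    have hy0osc := mul_le_mul_of_nonneg_left
      (sub_le_sub (hy0 _ _ ha').2 (hy0 _ _ (hα s)).1) hV.le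
    have hfosc := mul_le_mul_of_nonneg_left (sub_le_sub (hf _ hx').2 (hf _ (hγ s)).1) hV.le
    linarith [happrox s a' ha' _ hx']
  have hC₀sq : V * C₀ ^ 2 = 2 * (B + (C + V * (y0max - y0min + (fmax - fmin)))) := by
    have hBnonneg : 0 ≤ B := le_trans (by positivity) (hB 0 _ (hα 0) _ (hγ 0))
    have hCnonneg : 0 ≤ C := le_add_iff_nonneg_right _ |>.mp (happrox 0 _ (hα 0) _ (hγ 0))
    have hy0osc : 0 ≤ y0max - y0min := sub_nonneg.mpr ((hy0 _ _ (hα 0)).1.trans (hy0 _ _ (hα 0)).2)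
    have hfosc : 0 ≤ fmax - fmin := sub_nonneg.mpr ((hf _ (hγ 0)).1.trans (hf _ (hγ 0)).2)
    rw [hC₀, add_assoc ((B + C) / V), mul_sq_sqrt_two_mul_div_add hV (add_nonneg hBnonneg hCnonneg)
      (add_nonneg hy0osc hfosc), add_assoc B]
  have hlyap := lyapunov_le_of_driftPlusPenalty_le hQnonneg (fun k s => ha _ _ (hα s) k)
    (fun k s => hb _ _ (hα s) k) (fun l s => by rw [hZ, add_assoc]) hQ
    (fun m s => by rw [hH, add_sub_assoc]) (fun s => hB s _ (hα s) _ (hγ s)) hpenalty t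
  refine queue_bounds_of_two_mul_lyapunov_le (by positivity) (hC₀ ▸ Real.sqrt_nonneg _) ?_
  rw [mul_assoc (t : ℝ), hC₀sq]
  linarith

/-- Theorem 1(a): under Assumptions A1 and A2, any `C`-approximate policy run against
an arbitrary event sequence satisfies, for every slot `t > 0`,
`ΣZ_l(t)² + ΣQ_k(t)² + ΣH_m(t)² ≤ tVC₀² + 2L(Θ(0))` with
`C₀ = √(2[(B+C)/V + (y₀^max−y₀^min) + (f^max−f^min)])`; in particular each queue is at
most `√(tVC₀² + 2L(Θ(0)))`, and at most `C₀√(tV)` if all queues start empty. -/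
theorem stmt_3
    {Ω Act : Type*} (ω : ℕ → Ω) (A : Ω → Set Act) (hAne : ∀ w, (A w).Nonempty)
    (K M L : ℕ) (hK : 0 < K) (hM : 0 < M) (hL : 0 < L)
    (ahat bhat : Fin K → Act → Ω → ℝ) (xhat : Fin M → Act → Ω → ℝ)
    (y0hat : Act → Ω → ℝ) (yhat : Fin L → Act → Ω → ℝ)
    (amax bmax : Fin K → ℝ) (xmin xmax : Fin M → ℝ)
    (y0min y0max : ℝ) (ymin ymax : Fin L → ℝ)
    -- Assumption A1 (boundedness)
    (hA1a : ∀ (w : Ω) (a' : Act), a' ∈ A w → ∀ k, 0 ≤ ahat k a' w ∧ ahat k a' w ≤ amax k)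
    (hA1b : ∀ (w : Ω) (a' : Act), a' ∈ A w → ∀ k, 0 ≤ bhat k a' w ∧ bhat k a' w ≤ bmax k)
    (hA1x : ∀ (w : Ω) (a' : Act), a' ∈ A w → ∀ m, xmin m ≤ xhat m a' w ∧ xhat m a' w ≤ xmax m)
    (hA1y0 : ∀ (w : Ω) (a' : Act), a' ∈ A w → y0min ≤ y0hat a' w ∧ y0hat a' w ≤ y0max)
    (hA1y : ∀ (w : Ω) (a' : Act), a' ∈ A w → ∀ l, ymin l ≤ yhat l a' w ∧ yhat l a' w ≤ ymax l)
    -- the convex set X and the cost functions f, g_l on the box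
    (X : Set (Fin M → ℝ)) (hX : Convex ℝ X)
    (f : (Fin M → ℝ) → ℝ) (g : Fin L → (Fin M → ℝ) → ℝ)
    (fmin fmax : ℝ) (gmin gmax : Fin L → ℝ)
    (hfconv : ConvexOn ℝ {x : Fin M → ℝ | ∀ m, xmin m ≤ x m ∧ x m ≤ xmax m} f)
    (hfcont : ContinuousOn f {x : Fin M → ℝ | ∀ m, xmin m ≤ x m ∧ x m ≤ xmax m})
    (hfbd : ∀ x ∈ {x : Fin M → ℝ | ∀ m, xmin m ≤ x m ∧ x m ≤ xmax m},
      fmin ≤ f x ∧ f x ≤ fmax)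
    (hgconv : ∀ l, ConvexOn ℝ {x : Fin M → ℝ | ∀ m, xmin m ≤ x m ∧ x m ≤ xmax m} (g l))
    (hgcont : ∀ l, ContinuousOn (g l) {x : Fin M → ℝ | ∀ m, xmin m ≤ x m ∧ x m ≤ xmax m})
    (hgbd : ∀ l, ∀ x ∈ {x : Fin M → ℝ | ∀ m, xmin m ≤ x m ∧ x m ≤ xmax m},
      gmin l ≤ g l x ∧ g l x ≤ gmax l)
    -- Assumption A2
    (hA2 : ∀ t, ∃ a' ∈ A (ω t),
      (∀ l, yhat l a' (ω t) + g l (fun m => xhat m a' (ω t)) ≤ 0) ∧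
      (∀ k, ahat k a' (ω t) ≤ bhat k a' (ω t)) ∧
      (fun m => xhat m a' (ω t)) ∈ X)
    -- parameters
    (V C B : ℝ) (hV : 0 < V) (hC : 0 ≤ C)
    (hB : ∀ (t : ℕ) (a' : Act) (γ' : Fin M → ℝ), a' ∈ A (ω t) → γ' ∈ X →
      (∀ m, xmin m ≤ γ' m ∧ γ' m ≤ xmax m) →
      (1 / 2) * ∑ l, (yhat l a' (ω t) + g l γ') ^ 2
        + (1 / 2) * ∑ k, ((bhat k a' (ω t)) ^ 2 + (ahat k a' (ω t)) ^ 2)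
        + (1 / 2) * ∑ m, (γ' m - xhat m a' (ω t)) ^ 2 ≤ B)
    -- the C-approximate policy and the queues
    (α : ℕ → Act) (γ : ℕ → Fin M → ℝ)
    (hα : ∀ t, α t ∈ A (ω t)) (hγX : ∀ t, γ t ∈ X)
    (hγbox : ∀ t m, xmin m ≤ γ t m ∧ γ t m ≤ xmax m)
    (Q : Fin K → ℕ → ℝ) (Z : Fin L → ℕ → ℝ) (H : Fin M → ℕ → ℝ)
    (hQ0 : ∀ k, 0 ≤ Q k 0) (hZ0 : ∀ l, 0 ≤ Z l 0)
    (hQ : ∀ k t, Q k (t + 1) = max (Q k t - bhat k (α t) (ω t)) 0 + ahat k (α t) (ω t))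
    (hZ : ∀ l t, Z l (t + 1) = max (Z l t + yhat l (α t) (ω t) + g l (γ t)) 0)
    (hH : ∀ m t, H m (t + 1) = H m t + γ t m - xhat m (α t) (ω t))
    (hCapprox : ∀ (t : ℕ) (a' : Act) (γ' : Fin M → ℝ), a' ∈ A (ω t) → γ' ∈ X →
      (∀ m, xmin m ≤ γ' m ∧ γ' m ≤ xmax m) →
      driftExpr ahat bhat xhat y0hat yhat g f V (ω t)
          (fun l => Z l t) (fun k => Q k t) (fun m => H m t) (α t) (γ t)
        ≤ driftExpr ahat bhat xhat y0hat yhat g f V (ω t)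
          (fun l => Z l t) (fun k => Q k t) (fun m => H m t) a' γ' + C)
    -- the Lyapunov function and the constant C₀
    (Ly : ℕ → ℝ)
    (hLy : ∀ t, Ly t = (1 / 2) * ∑ l, (Z l t) ^ 2 + (1 / 2) * ∑ k, (Q k t) ^ 2
        + (1 / 2) * ∑ m, (H m t) ^ 2)
    (C₀ : ℝ)
    (hC₀ : C₀ = Real.sqrt (2 * ((B + C) / V + (y0max - y0min) + (fmax - fmin)))) :
    ∀ t : ℕ, 0 < t →
      (∑ l, (Z l t) ^ 2 + ∑ k, (Q k t) ^ 2 + ∑ m, (H m t) ^ 2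
          ≤ (t : ℝ) * V * C₀ ^ 2 + 2 * Ly 0) ∧
      (∀ l, Z l t ≤ Real.sqrt ((t : ℝ) * V * C₀ ^ 2 + 2 * Ly 0)) ∧
      (∀ k, Q k t ≤ Real.sqrt ((t : ℝ) * V * C₀ ^ 2 + 2 * Ly 0)) ∧
      (∀ m, |H m t| ≤ Real.sqrt ((t : ℝ) * V * C₀ ^ 2 + 2 * Ly 0)) ∧
      (((∀ l, Z l 0 = 0) ∧ (∀ k, Q k 0 = 0) ∧ (∀ m, H m 0 = 0)) →
        (∀ l, Z l t ≤ C₀ * Real.sqrt ((t : ℝ) * V)) ∧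
        (∀ k, Q k t ≤ C₀ * Real.sqrt ((t : ℝ) * V)) ∧
        (∀ m, |H m t| ≤ C₀ * Real.sqrt ((t : ℝ) * V))) := by
  intro t _
  rw [hLy 0]
  exact stmt_3_general ω A ahat bhat xhat y0hat yhat y0min y0max
    (fun w a' ha' k => (hA1a w a' ha' k).1) (fun w a' ha' k => (hA1b w a' ha' k).1) hA1y0
    {x ∈ X | ∀ m, xmin m ≤ x m ∧ x m ≤ xmax m} f g fmin fmax (fun x hx => hfbd x hx.2)
    (fun t => let ⟨a', ha', hy', hab', hx'⟩ := hA2 t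
      ⟨a', ha', hy', hab', hx', hA1x _ _ ha'⟩)
    V C B hV (fun t a' ha' γ' hγ' => hB t a' γ' ha' hγ'.1 hγ'.2)
    α γ hα (fun t => ⟨hγX t, hγbox t⟩) Q Z H hQ0 hZ0 hQ hZ hH
    (fun t a' ha' γ' hγ' => hCapprox t a' γ' ha' hγ'.1 hγ'.2) C₀ hC₀ t
end

section
/- For any initial time t₀, any queue values Θ(t₀), any integer T > 1, and any collection of C-approximate decisions implemented over the interval τ ∈ {t₀,…,t₀+T−1}: Δ_T(t₀) + Σ_{τ=t₀}^{t₀+T−1} [V ŷ₀(α(τ),ω(τ)) + V f(γ(τ))] ≤ BT + CT + DT(T−1) + Σ_τ [V ŷ₀(α*(τ),ω(τ)) + V f(γ*(τ))] + Σ_{l=1}^L Z_l(t₀) Σ_τ [ŷ_l(α*(τ),ω(τ)) + g_l(γ*(τ))] + Σ_{k=1}^K Q_k(t₀) Σ_τ [â_k(α*(τ),ω(τ)) − b̂_k(α*(τ),ω(τ))] + Σ_{m=1}^M H_m(t₀) Σ_τ [γ*_m(τ) − x̂_m(α*(τ),ω(τ))], for any alternative decisions α*(τ) ∈ A_{ω(τ)}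 and γ*(τ) ∈ X (with x_m^min ≤ γ*_m(τ) ≤ x_m^max) over τ ∈ {t₀,…,t₀+T−1}. -/
/-!
The `L + K + M` queues are treated as one family `Θ`: each has a net input `v` with
`Θ(t+1)² ≤ Θ(t)² + 2 Θ(t) v(t) + s(t)` and moves by at most a constant `c` per slot. Summing the
first property bounds the one-slot drift by `B + ∑ Θ(t) v(t)`, and `C`-approximate minimization lets
`v` be replaced by the net input `v*` of any alternative decision. By the second property, replacing
`Θ(t)` by `Θ(t₀)` costs at most `(t - t₀) ∑ c |v*| ≤ 2 D (t - t₀)`. Summing over the `T` slots, the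
drift telescopes and `∑ 2 D (t - t₀) = D T (T - 1)`.
-/

open Finset

theorem sum_Ico_natCast_sub (t₀ T : ℕ) :
    ∑ t ∈ Ico t₀ (t₀ + T), ((t : ℝ) - t₀) = T * (T - 1) / 2 := by
  simp only [sum_Ico_eq_sum_range, Nat.add_sub_cancel_left, Nat.cast_add, add_sub_cancel_left]
  rw [← Nat.cast_sum, sum_range_id, ← Nat.choose_two_right, Nat.cast_choose_two]

theorem sq_max_zero_le_sq (x : ℝ) : max x 0 ^ 2 ≤ x ^ 2 :=
  sq_le_sq.2 <| by simpa using abs_max_sub_max_le_abs x 0 0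

theorem sq_max_sub_add_le {q a b : ℝ} (hq : 0 ≤ q) (ha : 0 ≤ a) (hb : 0 ≤ b) :
    (max (q - b) 0 + a) ^ 2 ≤ q ^ 2 + 2 * (q * (a - b)) + (b ^ 2 + a ^ 2) := by
  have served_le : max (q - b) 0 ≤ q := max_le (sub_le_self q hb) hq
  calc (max (q - b) 0 + a) ^ 2 = max (q - b) 0 ^ 2 + 2 * (max (q - b) 0 * a) + a ^ 2 := by ring
    _ ≤ (q - b) ^ 2 + 2 * (q * a) + a ^ 2 := by grw [sq_max_zero_le_sq, served_le]
    _ = q ^ 2 + 2 * (q * (a - b)) + (b ^ 2 + a ^ 2) := by ring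

theorem abs_max_sub_add_sub_le {q a b : ℝ} (hq : 0 ≤ q) (ha : 0 ≤ a) (hb : 0 ≤ b) :
    |max (q - b) 0 + a - q| ≤ max b a := by
  have served_le : max (q - b) 0 ≤ q := max_le (sub_le_self q hb) hq
  rw [abs_le]
  constructor
  · linarith [le_max_left (q - b) 0, le_max_left b a]
  · linarith [le_max_right b a]

/-- A queue `q` with net input `v` whose one-slot change is at most `c` and whose quadratic drift
is at most `2 q v` up to the second-order term `s`. These are the only properties of the update
rules on which drift bounds depend. -/
structure HasBoundedDrift (q v s : ℕ → ℝ) (c : ℝ) : Prop where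
  abs_succ_sub_le : ∀ t, |q (t + 1) - q t| ≤ c
  sq_succ_le : ∀ t, q (t + 1) ^ 2 ≤ q t ^ 2 + 2 * (q t * v t) + s t

namespace HasBoundedDrift

theorem of_succ_eq_add {q v : ℕ → ℝ} {c : ℝ} (hq : ∀ t, q (t + 1) = q t + v t)
    (hv : ∀ t, |v t| ≤ c) : HasBoundedDrift q v (fun t => v t ^ 2) c where
  abs_succ_sub_le t := by simpa only [hq, add_sub_cancel_left] using hv t
  sq_succ_le t := by rw [hq, add_sq, mul_assoc]

theorem of_succ_eq_max {q v : ℕ → ℝ} {c : ℝ} (hq0 : 0 ≤ q 0)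
    (hq : ∀ t, q (t + 1) = max (q t + v t) 0) (hv : ∀ t, |v t| ≤ c) :
    HasBoundedDrift q v (fun t => v t ^ 2) c where
  abs_succ_sub_le t := by
    have hqt : 0 ≤ q t := by
      cases t with
      | zero => exact hq0
      | succ t => exact hq t ▸ le_max_right _ _
    calc |q (t + 1) - q t| = |max (q t + v t) 0 - max (q t) 0| := by rw [hq, max_eq_left hqt]
      _ ≤ |q t + v t - q t| := abs_max_sub_max_le_abs _ _ _
      _ ≤ c := by simpa only [add_sub_cancel_left] using hv t
  sq_succ_le t := by
    rw [hq, ← mul_assoc, ← add_sq]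
    exact sq_max_zero_le_sq _

theorem of_succ_eq_max_sub_add {q a b : ℕ → ℝ} {c : ℝ} (hq0 : 0 ≤ q 0)
    (hq : ∀ t, q (t + 1) = max (q t - b t) 0 + a t) (ha : ∀ t, 0 ≤ a t) (hb : ∀ t, 0 ≤ b t)
    (hc : ∀ t, max (b t) (a t) ≤ c) :
    HasBoundedDrift q (fun t => a t - b t) (fun t => b t ^ 2 + a t ^ 2) c := by
  have q_nonneg : ∀ t, 0 ≤ q t
    | 0 => hq0
    | t + 1 => hq t ▸ add_nonneg (le_max_right _ _) (ha t)
  exact {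
    abs_succ_sub_le := fun t =>
      hq t ▸ (abs_max_sub_add_sub_le (q_nonneg t) (ha t) (hb t)).trans (hc t)
    sq_succ_le := fun t => hq t ▸ sq_max_sub_add_le (q_nonneg t) (ha t) (hb t) }

theorem abs_sub_le_mul {q v s : ℕ → ℝ} {c : ℝ} (h : HasBoundedDrift q v s c) {t₀ t : ℕ}
    (ht : t₀ ≤ t) : |q t - q t₀| ≤ ((t : ℝ) - t₀) * c := by
  have h_dist : dist (q t₀) (q t) ≤ ∑ _i ∈ Ico t₀ t, c :=
    dist_le_Ico_sum_of_dist_le ht fun {k} _ _ => by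
      simpa only [dist_comm (q k), Real.dist_eq] using h.abs_succ_sub_le k
  simpa only [dist_comm (q t₀), Real.dist_eq, sum_const, Nat.card_Ico, nsmul_eq_mul,
    Nat.cast_sub ht] using h_dist

theorem mul_le_mul_add {q v s : ℕ → ℝ} {c : ℝ} (h : HasBoundedDrift q v s c) {t₀ t : ℕ}
    (ht : t₀ ≤ t) (x : ℝ) : q t * x ≤ q t₀ * x + ((t : ℝ) - t₀) * (c * |x|) := by
  have h_change : (q t - q t₀) * x ≤ ((t : ℝ) - t₀) * c * |x| :=
    calc (q t - q t₀) * x ≤ |q t - q t₀| * |x| := abs_mul (q t - q t₀) x ▸ le_abs_self _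
      _ ≤ ((t : ℝ) - t₀) * c * |x| := by gcongr; exact h.abs_sub_le_mul ht
  linarith

end HasBoundedDrift

/-- The Lyapunov function `½ ∑ θᵢ²` of a vector `θ` of queue values. -/
noncomputable def quadraticLyapunov {ι : Type*} [Fintype ι] (θ : ι → ℝ) : ℝ :=
  1 / 2 * ∑ i, θ i ^ 2

section DriftPlusPenalty

variable {ι : Type*} [Fintype ι] {q v s : ι → ℕ → ℝ} {c : ι → ℝ}

theorem quadraticLyapunov_succ_sub_le (h : ∀ i, HasBoundedDrift (q i) (v i) (s i) (c i)) (t : ℕ) :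
    quadraticLyapunov (q · (t + 1)) - quadraticLyapunov (q · t)
      ≤ 1 / 2 * ∑ i, s i t + ∑ i, q i t * v i t := by
  have h_sum : ∑ i, q i (t + 1) ^ 2 ≤ ∑ i, (q i t ^ 2 + 2 * (q i t * v i t) + s i t) :=
    sum_le_sum fun i _ => (h i).sq_succ_le t
  simp only [sum_add_distrib, ← mul_sum] at h_sum
  unfold quadraticLyapunov
  linarith

theorem sum_mul_le_sum_mul_add (h : ∀ i, HasBoundedDrift (q i) (v i) (s i) (c i)) {t₀ t : ℕ}
    (ht : t₀ ≤ t) (x : ι → ℝ) :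
    ∑ i, q i t * x i ≤ ∑ i, q i t₀ * x i + ((t : ℝ) - t₀) * ∑ i, c i * |x i| := by
  rw [mul_sum, ← sum_add_distrib]
  exact sum_le_sum fun i _ => (h i).mul_le_mul_add ht (x i)

variable {p p' : ℕ → ℝ} {v' : ι → ℕ → ℝ} {B C D : ℝ}

theorem quadraticLyapunov_succ_sub_add_penalty_le
    (h : ∀ i, HasBoundedDrift (q i) (v i) (s i) (c i)) {t₀ t : ℕ} (ht : t₀ ≤ t)
    (hB : 1 / 2 * ∑ i, s i t ≤ B)
    (hC : p t + ∑ i, q i t * v i t ≤ p' t + ∑ i, q i t * v' i t + C)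
    (hD : ∑ i, c i * |v' i t| ≤ 2 * D) :
    quadraticLyapunov (q · (t + 1)) - quadraticLyapunov (q · t) + p t
      ≤ B + C + 2 * D * ((t : ℝ) - t₀) + p' t + ∑ i, q i t₀ * v' i t := by
  have h_drift := quadraticLyapunov_succ_sub_le h t
  have h_freeze := sum_mul_le_sum_mul_add h ht (v' · t)
  have h_cost : ((t : ℝ) - t₀) * ∑ i, c i * |v' i t| ≤ ((t : ℝ) - t₀) * (2 * D) :=
    mul_le_mul_of_nonneg_left hD (sub_nonneg.2 (Nat.cast_le.2 ht))
  linarith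

theorem quadraticLyapunov_sub_add_sum_penalty_le
    (h : ∀ i, HasBoundedDrift (q i) (v i) (s i) (c i)) {t₀ T : ℕ}
    (hB : ∀ t ∈ Ico t₀ (t₀ + T), 1 / 2 * ∑ i, s i t ≤ B)
    (hC : ∀ t ∈ Ico t₀ (t₀ + T),
      p t + ∑ i, q i t * v i t ≤ p' t + ∑ i, q i t * v' i t + C)
    (hD : ∀ t ∈ Ico t₀ (t₀ + T), ∑ i, c i * |v' i t| ≤ 2 * D) :
    quadraticLyapunov (q · (t₀ + T)) - quadraticLyapunov (q · t₀) + ∑ t ∈ Ico t₀ (t₀ + T), p t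
      ≤ B * T + C * T + D * T * ((T : ℝ) - 1) + ∑ t ∈ Ico t₀ (t₀ + T), p' t
        + ∑ i, q i t₀ * ∑ t ∈ Ico t₀ (t₀ + T), v' i t := by
  have h_sum := sum_le_sum fun t ht =>
    quadraticLyapunov_succ_sub_add_penalty_le h (mem_Ico.1 ht).1 (hB t ht) (hC t ht) (hD t ht)
  have h_telescope := sum_Ico_sub (fun t => quadraticLyapunov (q · t)) (Nat.le_add_right t₀ T)
  have h_swap : ∑ t ∈ Ico t₀ (t₀ + T), ∑ i, q i t₀ * v' i t
      = ∑ i, q i t₀ * ∑ t ∈ Ico t₀ (t₀ + T), v' i t := by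
    simp only [mul_sum, sum_comm (s := Ico t₀ (t₀ + T))]
  simp only [sum_add_distrib, sum_const, Nat.card_Ico, Nat.add_sub_cancel_left, nsmul_eq_mul,
    ← mul_sum, h_telescope, h_swap, sum_Ico_natCast_sub] at h_sum
  linarith

end DriftPlusPenalty

section Scheduling

variable {Ω Act κ μ ν : Type*}

/-- The net inputs `(ŷ + g, â - b̂, γ - x̂)` of the queues `(Z, Q, H)` under the decision `(a, γ)`
in state `w`; the disjoint sum indexes all queues as one family. -/
def netInput (ahat bhat : κ → Act → Ω → ℝ) (xhat : μ → Act → Ω → ℝ) (yhat : ν → Act → Ω → ℝ)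
    (g : ν → (μ → ℝ) → ℝ) (w : Ω) (a : Act) (γ : μ → ℝ) : ν ⊕ κ ⊕ μ → ℝ :=
  Sum.elim (fun l => yhat l a w + g l γ)
    (Sum.elim (fun k => ahat k a w - bhat k a w) fun m => γ m - xhat m a w)

/-- The second-order terms in the drifts of the queues `(Z, Q, H)`; half their sum is the quantity
bounded by `B`. -/
def secondOrderTerm (ahat bhat : κ → Act → Ω → ℝ) (xhat : μ → Act → Ω → ℝ) (yhat : ν → Act → Ω → ℝ)
    (g : ν → (μ → ℝ) → ℝ) (w : Ω) (a : Act) (γ : μ → ℝ) : ν ⊕ κ ⊕ μ → ℝ :=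
  Sum.elim (fun l => (yhat l a w + g l γ) ^ 2)
    (Sum.elim (fun k => bhat k a w ^ 2 + ahat k a w ^ 2) fun m => (γ m - xhat m a w) ^ 2)

/-- The bounds `(z^diff, q^diff, h^diff)` on the one-slot changes of the queues `(Z, Q, H)`. -/
noncomputable def maxStep (amax bmax : κ → ℝ) (xmin xmax : μ → ℝ) (ymin ymax gmin gmax : ν → ℝ) :
    ν ⊕ κ ⊕ μ → ℝ :=
  Sum.elim (fun l => max |ymax l + gmax l| |ymin l + gmin l|)
    (Sum.elim (fun k => max (bmax k) (amax k)) fun m => xmax m - xmin m)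

theorem driftExpr_eq_penalty_add_sum {K M L : ℕ} {ahat bhat : Fin K → Act → Ω → ℝ}
    {xhat : Fin M → Act → Ω → ℝ} {y0hat : Act → Ω → ℝ} {yhat : Fin L → Act → Ω → ℝ}
    {g : Fin L → (Fin M → ℝ) → ℝ} {f : (Fin M → ℝ) → ℝ} {V : ℝ} {w : Ω} {a : Act}
    {γ : Fin M → ℝ} (Z : Fin L → ℕ → ℝ) (Q : Fin K → ℕ → ℝ) (H : Fin M → ℕ → ℝ) (t : ℕ) :
    driftExpr ahat bhat xhat y0hat yhat g f V w (Z · t) (Q · t) (H · t) a γ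
      = V * y0hat a w + V * f γ
        + ∑ i, Sum.elim Z (Sum.elim Q H) i t * netInput ahat bhat xhat yhat g w a γ i := by
  simp only [driftExpr, netInput, Fintype.sum_sum_type, Sum.elim_inl, Sum.elim_inr, add_assoc]

theorem hasBoundedDrift_queues {ahat bhat : κ → Act → Ω → ℝ} {xhat : μ → Act → Ω → ℝ}
    {yhat : ν → Act → Ω → ℝ} {g : ν → (μ → ℝ) → ℝ} {amax bmax : κ → ℝ} {xmin xmax : μ → ℝ}
    {ymin ymax gmin gmax : ν → ℝ} {ω : ℕ → Ω} {α : ℕ → Act} {γ : ℕ → μ → ℝ}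
    {Q : κ → ℕ → ℝ} {Z : ν → ℕ → ℝ} {H : μ → ℕ → ℝ}
    (ha : ∀ t k, 0 ≤ ahat k (α t) (ω t) ∧ ahat k (α t) (ω t) ≤ amax k)
    (hb : ∀ t k, 0 ≤ bhat k (α t) (ω t) ∧ bhat k (α t) (ω t) ≤ bmax k)
    (hx : ∀ t m, xmin m ≤ xhat m (α t) (ω t) ∧ xhat m (α t) (ω t) ≤ xmax m)
    (hy : ∀ t l, ymin l ≤ yhat l (α t) (ω t) ∧ yhat l (α t) (ω t) ≤ ymax l)
    (hg : ∀ t l, gmin l ≤ g l (γ t) ∧ g l (γ t) ≤ gmax l)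
    (hγ : ∀ t m, xmin m ≤ γ t m ∧ γ t m ≤ xmax m)
    (hQ0 : ∀ k, 0 ≤ Q k 0) (hZ0 : ∀ l, 0 ≤ Z l 0)
    (hQ : ∀ k t, Q k (t + 1) = max (Q k t - bhat k (α t) (ω t)) 0 + ahat k (α t) (ω t))
    (hZ : ∀ l t, Z l (t + 1) = max (Z l t + yhat l (α t) (ω t) + g l (γ t)) 0)
    (hH : ∀ m t, H m (t + 1) = H m t + γ t m - xhat m (α t) (ω t)) (i : ν ⊕ κ ⊕ μ) :
    HasBoundedDrift (Sum.elim Z (Sum.elim Q H) i)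
      (fun t => netInput ahat bhat xhat yhat g (ω t) (α t) (γ t) i)
      (fun t => secondOrderTerm ahat bhat xhat yhat g (ω t) (α t) (γ t) i)
      (maxStep amax bmax xmin xmax ymin ymax gmin gmax i) := by
  rcases i with l | k | m
  · refine .of_succ_eq_max (hZ0 l) (fun t => add_assoc (Z l t) _ _ ▸ hZ l t) fun t => ?_
    exact (abs_le_max_abs_abs (add_le_add (hy t l).1 (hg t l).1)
      (add_le_add (hy t l).2 (hg t l).2)).trans_eq (max_comm _ _)
  · exact .of_succ_eq_max_sub_add (hQ0 k) (hQ k) (fun t => (ha t k).1) (fun t => (hb t k).1)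
      fun t => max_le_max (hb t k).2 (ha t k).2
  · exact .of_succ_eq_add (fun t => add_sub_assoc (H m t) _ _ ▸ hH m t) fun t =>
      abs_sub_le_of_le_of_le (hγ t m).1 (hγ t m).2 (hx t m).1 (hx t m).2

variable [Fintype κ] [Fintype μ] [Fintype ν]

theorem quadraticLyapunov_sumElim (z : ν → ℝ) (q : κ → ℝ) (η : μ → ℝ) :
    quadraticLyapunov (Sum.elim z (Sum.elim q η))
      = 1 / 2 * ∑ l, z l ^ 2 + 1 / 2 * ∑ k, q k ^ 2 + 1 / 2 * ∑ m, η m ^ 2 := by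
  simp only [quadraticLyapunov, Fintype.sum_sum_type, Sum.elim_inl, Sum.elim_inr, mul_add,
    add_assoc]

theorem half_sum_secondOrderTerm (ahat bhat : κ → Act → Ω → ℝ) (xhat : μ → Act → Ω → ℝ)
    (yhat : ν → Act → Ω → ℝ) (g : ν → (μ → ℝ) → ℝ) (w : Ω) (a : Act) (γ : μ → ℝ) :
    1 / 2 * ∑ i, secondOrderTerm ahat bhat xhat yhat g w a γ i
      = 1 / 2 * ∑ l, (yhat l a w + g l γ) ^ 2 + 1 / 2 * ∑ k, (bhat k a w ^ 2 + ahat k a w ^ 2)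
        + 1 / 2 * ∑ m, (γ m - xhat m a w) ^ 2 := by
  simp only [secondOrderTerm, Fintype.sum_sum_type, Sum.elim_inl, Sum.elim_inr, mul_add, add_assoc]

theorem sum_maxStep_mul_abs_netInput_le {ahat bhat : κ → Act → Ω → ℝ} {xhat : μ → Act → Ω → ℝ}
    {yhat : ν → Act → Ω → ℝ} {g : ν → (μ → ℝ) → ℝ} {amax bmax : κ → ℝ} {xmin xmax : μ → ℝ}
    {ymin ymax gmin gmax : ν → ℝ} {w : Ω} {a : Act} {γ : μ → ℝ} {D : ℝ}
    (ha : ∀ k, 0 ≤ ahat k a w ∧ ahat k a w ≤ amax k) (hb : ∀ k, 0 ≤ bhat k a w)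
    (hx : ∀ m, xmin m ≤ xmax m)
    (hD : 1 / 2 * ∑ l, max |ymax l + gmax l| |ymin l + gmin l| * |yhat l a w + g l γ|
      + ∑ m, (xmax m - xmin m) * |xhat m a w - γ m|
      + 1 / 2 * ∑ k, max (bmax k) (amax k) * max (bhat k a w) (ahat k a w) ≤ D) :
    ∑ i, maxStep amax bmax xmin xmax ymin ymax gmin gmax i
      * |netInput ahat bhat xhat yhat g w a γ i| ≤ 2 * D := by
  have hQ_le : ∑ k, max (bmax k) (amax k) * |ahat k a w - bhat k a w|
      ≤ ∑ k, max (bmax k) (amax k) * max (bhat k a w) (ahat k a w) :=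
    sum_le_sum fun k _ => mul_le_mul_of_nonneg_left
      (abs_sub_le_of_nonneg_of_le (ha k).1 (le_max_right _ _) (hb k) (le_max_left _ _))
      (le_max_of_le_right ((ha k).1.trans (ha k).2))
  have hH_nonneg : 0 ≤ ∑ m, (xmax m - xmin m) * |xhat m a w - γ m| :=
    sum_nonneg fun m _ => mul_nonneg (sub_nonneg.2 (hx m)) (abs_nonneg _)
  simp only [maxStep, netInput, Fintype.sum_sum_type, Sum.elim_inl, Sum.elim_inr,
    abs_sub_comm (γ _)]
  linarith

end Scheduling

theorem stmt_6_general {Ω Act : Type*} {ω : ℕ → Ω} {A : Ω → Set Act} {K M L : ℕ}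
    {ahat bhat : Fin K → Act → Ω → ℝ} {xhat : Fin M → Act → Ω → ℝ}
    {y0hat : Act → Ω → ℝ} {yhat : Fin L → Act → Ω → ℝ}
    {amax bmax : Fin K → ℝ} {xmin xmax : Fin M → ℝ} {ymin ymax : Fin L → ℝ}
    (hA1a : ∀ w, ∀ a' ∈ A w, ∀ k, 0 ≤ ahat k a' w ∧ ahat k a' w ≤ amax k)
    (hA1b : ∀ w, ∀ a' ∈ A w, ∀ k, 0 ≤ bhat k a' w ∧ bhat k a' w ≤ bmax k)
    (hA1x : ∀ w, ∀ a' ∈ A w, ∀ m, xmin m ≤ xhat m a' w ∧ xhat m a' w ≤ xmax m)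
    (hA1y : ∀ w, ∀ a' ∈ A w, ∀ l, ymin l ≤ yhat l a' w ∧ yhat l a' w ≤ ymax l)
    {X : Set (Fin M → ℝ)} {f : (Fin M → ℝ) → ℝ} {g : Fin L → (Fin M → ℝ) → ℝ}
    {gmin gmax : Fin L → ℝ}
    (hgbd : ∀ l x, (∀ m, xmin m ≤ x m ∧ x m ≤ xmax m) → gmin l ≤ g l x ∧ g l x ≤ gmax l)
    {V C B D : ℝ}
    (hB : ∀ (t : ℕ) (a' : Act) (γ' : Fin M → ℝ), a' ∈ A (ω t) → γ' ∈ X →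
      (∀ m, xmin m ≤ γ' m ∧ γ' m ≤ xmax m) →
      (1 / 2) * ∑ l, (yhat l a' (ω t) + g l γ') ^ 2
        + (1 / 2) * ∑ k, ((bhat k a' (ω t)) ^ 2 + (ahat k a' (ω t)) ^ 2)
        + (1 / 2) * ∑ m, (γ' m - xhat m a' (ω t)) ^ 2 ≤ B)
    (hD : ∀ (t : ℕ) (a' : Act) (γ' : Fin M → ℝ), a' ∈ A (ω t) → γ' ∈ X →
      (∀ m, xmin m ≤ γ' m ∧ γ' m ≤ xmax m) →
      (1 / 2) * ∑ l, max (|ymax l + gmax l|) (|ymin l + gmin l|)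
          * |yhat l a' (ω t) + g l γ'|
        + ∑ m, (xmax m - xmin m) * |xhat m a' (ω t) - γ' m|
        + (1 / 2) * ∑ k, max (bmax k) (amax k)
          * max (bhat k a' (ω t)) (ahat k a' (ω t)) ≤ D)
    {α : ℕ → Act} {γ : ℕ → Fin M → ℝ}
    (hα : ∀ t, α t ∈ A (ω t)) (hγX : ∀ t, γ t ∈ X)
    (hγbox : ∀ t m, xmin m ≤ γ t m ∧ γ t m ≤ xmax m)
    {Q : Fin K → ℕ → ℝ} {Z : Fin L → ℕ → ℝ} {H : Fin M → ℕ → ℝ}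
    (hQ0 : ∀ k, 0 ≤ Q k 0) (hZ0 : ∀ l, 0 ≤ Z l 0)
    (hQ : ∀ k t, Q k (t + 1) = max (Q k t - bhat k (α t) (ω t)) 0 + ahat k (α t) (ω t))
    (hZ : ∀ l t, Z l (t + 1) = max (Z l t + yhat l (α t) (ω t) + g l (γ t)) 0)
    (hH : ∀ m t, H m (t + 1) = H m t + γ t m - xhat m (α t) (ω t))
    {Ly : ℕ → ℝ}
    (hLy : ∀ t, Ly t = (1 / 2) * ∑ l, (Z l t) ^ 2 + (1 / 2) * ∑ k, (Q k t) ^ 2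
        + (1 / 2) * ∑ m, (H m t) ^ 2)
    {t₀ T : ℕ}
    (hCapprox : ∀ τ ∈ Ico t₀ (t₀ + T), ∀ (a' : Act) (γ' : Fin M → ℝ),
      a' ∈ A (ω τ) → γ' ∈ X → (∀ m, xmin m ≤ γ' m ∧ γ' m ≤ xmax m) →
      driftExpr ahat bhat xhat y0hat yhat g f V (ω τ) (Z · τ) (Q · τ) (H · τ) (α τ) (γ τ)
        ≤ driftExpr ahat bhat xhat y0hat yhat g f V (ω τ) (Z · τ) (Q · τ) (H · τ) a' γ' + C)
    {αs : ℕ → Act} {γs : ℕ → Fin M → ℝ}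
    (hαs : ∀ τ ∈ Ico t₀ (t₀ + T), αs τ ∈ A (ω τ))
    (hγsX : ∀ τ ∈ Ico t₀ (t₀ + T), γs τ ∈ X)
    (hγsbox : ∀ τ ∈ Ico t₀ (t₀ + T), ∀ m, xmin m ≤ γs τ m ∧ γs τ m ≤ xmax m) :
    Ly (t₀ + T) - Ly t₀ + ∑ τ ∈ Ico t₀ (t₀ + T), (V * y0hat (α τ) (ω τ) + V * f (γ τ))
    ≤ B * T + C * T + D * T * ((T : ℝ) - 1)
      + ∑ τ ∈ Ico t₀ (t₀ + T), (V * y0hat (αs τ) (ω τ) + V * f (γs τ))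
      + ∑ l, Z l t₀ * ∑ τ ∈ Ico t₀ (t₀ + T), (yhat l (αs τ) (ω τ) + g l (γs τ))
      + ∑ k, Q k t₀ * ∑ τ ∈ Ico t₀ (t₀ + T), (ahat k (αs τ) (ω τ) - bhat k (αs τ) (ω τ))
      + ∑ m, H m t₀ * ∑ τ ∈ Ico t₀ (t₀ + T), (γs τ m - xhat m (αs τ) (ω τ)) := by
  have h_queues := hasBoundedDrift_queues (fun t => hA1a _ _ (hα t)) (fun t => hA1b _ _ (hα t))
    (fun t => hA1x _ _ (hα t)) (fun t => hA1y _ _ (hα t)) (fun t l => hgbd l _ (hγbox t))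
    hγbox hQ0 hZ0 hQ hZ hH
  have h_lyapunov : ∀ t, Ly t = quadraticLyapunov (Sum.elim Z (Sum.elim Q H) · t) := fun t => by
    rw [hLy, ← quadraticLyapunov_sumElim]
    congr 1 with (l | k | m) <;> rfl
  have h_bound := quadraticLyapunov_sub_add_sum_penalty_le h_queues
    (p := fun t => V * y0hat (α t) (ω t) + V * f (γ t))
    (p' := fun t => V * y0hat (αs t) (ω t) + V * f (γs t))
    (v' := fun i t => netInput ahat bhat xhat yhat g (ω t) (αs t) (γs t) i)
    (fun t _ => (half_sum_secondOrderTerm ..).trans_le (hB t _ _ (hα t) (hγX t) (hγbox t)))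
    (fun t ht => by
      simpa only [driftExpr_eq_penalty_add_sum Z Q H t]
        using hCapprox t ht _ _ (hαs t ht) (hγsX t ht) (hγsbox t ht))
    (fun t ht => sum_maxStep_mul_abs_netInput_le (hA1a _ _ (hαs t ht))
      (fun k => (hA1b _ _ (hαs t ht) k).1) (fun m => (hγbox t m).1.trans (hγbox t m).2)
      (hD t _ _ (hαs t ht) (hγsX t ht) (hγsbox t ht)))
  simpa only [h_lyapunov, netInput, Fintype.sum_sum_type, Sum.elim_inl, Sum.elim_inr, add_assoc]
    using h_bound

/-- Lemma 3 (`T`-slot drift bound for `C`-approximate decisions): for any start time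
`t₀`, any queue values `Θ(t₀)`, any integer `T > 1`, and any `C`-approximate decisions
over `τ ∈ {t₀,…,t₀+T−1}`, the `T`-slot drift plus accumulated penalty is bounded by
`BT + CT + DT(T−1)` plus the corresponding terms of any alternative feasible decision
sequence, with queue values frozen at time `t₀`. -/
theorem stmt_6
    {Ω Act : Type*} (ω : ℕ → Ω) (A : Ω → Set Act) (hAne : ∀ w, (A w).Nonempty)
    (K M L : ℕ) (hK : 0 < K) (hM : 0 < M) (hL : 0 < L)
    (ahat bhat : Fin K → Act → Ω → ℝ) (xhat : Fin M → Act → Ω → ℝ)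
    (y0hat : Act → Ω → ℝ) (yhat : Fin L → Act → Ω → ℝ)
    (amax bmax : Fin K → ℝ) (xmin xmax : Fin M → ℝ)
    (y0min y0max : ℝ) (ymin ymax : Fin L → ℝ)
    -- Assumption A1 (boundedness)
    (hA1a : ∀ (w : Ω) (a' : Act), a' ∈ A w → ∀ k, 0 ≤ ahat k a' w ∧ ahat k a' w ≤ amax k)
    (hA1b : ∀ (w : Ω) (a' : Act), a' ∈ A w → ∀ k, 0 ≤ bhat k a' w ∧ bhat k a' w ≤ bmax k)
    (hA1x : ∀ (w : Ω) (a' : Act), a' ∈ A w → ∀ m, xmin m ≤ xhat m a' w ∧ xhat m a' w ≤ xmax m)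
    (hA1y0 : ∀ (w : Ω) (a' : Act), a' ∈ A w → y0min ≤ y0hat a' w ∧ y0hat a' w ≤ y0max)
    (hA1y : ∀ (w : Ω) (a' : Act), a' ∈ A w → ∀ l, ymin l ≤ yhat l a' w ∧ yhat l a' w ≤ ymax l)
    -- the convex set X and the cost functions f, g_l on the box
    (X : Set (Fin M → ℝ)) (hX : Convex ℝ X)
    (f : (Fin M → ℝ) → ℝ) (g : Fin L → (Fin M → ℝ) → ℝ)
    (gmin gmax : Fin L → ℝ)
    (hfconv : ConvexOn ℝ {x : Fin M → ℝ | ∀ m, xmin m ≤ x m ∧ x m ≤ xmax m} f)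
    (hfcont : ContinuousOn f {x : Fin M → ℝ | ∀ m, xmin m ≤ x m ∧ x m ≤ xmax m})
    (hgconv : ∀ l, ConvexOn ℝ {x : Fin M → ℝ | ∀ m, xmin m ≤ x m ∧ x m ≤ xmax m} (g l))
    (hgcont : ∀ l, ContinuousOn (g l) {x : Fin M → ℝ | ∀ m, xmin m ≤ x m ∧ x m ≤ xmax m})
    (hgbd : ∀ l, ∀ x ∈ {x : Fin M → ℝ | ∀ m, xmin m ≤ x m ∧ x m ≤ xmax m},
      gmin l ≤ g l x ∧ g l x ≤ gmax l)
    -- parameters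
    (V C B D : ℝ) (hV : 0 ≤ V) (hC : 0 ≤ C)
    (hB : ∀ (t : ℕ) (a' : Act) (γ' : Fin M → ℝ), a' ∈ A (ω t) → γ' ∈ X →
      (∀ m, xmin m ≤ γ' m ∧ γ' m ≤ xmax m) →
      (1 / 2) * ∑ l, (yhat l a' (ω t) + g l γ') ^ 2
        + (1 / 2) * ∑ k, ((bhat k a' (ω t)) ^ 2 + (ahat k a' (ω t)) ^ 2)
        + (1 / 2) * ∑ m, (γ' m - xhat m a' (ω t)) ^ 2 ≤ B)
    (hD : ∀ (t : ℕ) (a' : Act) (γ' : Fin M → ℝ), a' ∈ A (ω t) → γ' ∈ X →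
      (∀ m, xmin m ≤ γ' m ∧ γ' m ≤ xmax m) →
      (1 / 2) * ∑ l, max (|ymax l + gmax l|) (|ymin l + gmin l|)
          * |yhat l a' (ω t) + g l γ'|
        + ∑ m, (xmax m - xmin m) * |xhat m a' (ω t) - γ' m|
        + (1 / 2) * ∑ k, max (bmax k) (amax k)
          * max (bhat k a' (ω t)) (ahat k a' (ω t)) ≤ D)
    -- the policy and the queues
    (α : ℕ → Act) (γ : ℕ → Fin M → ℝ)
    (hα : ∀ t, α t ∈ A (ω t)) (hγX : ∀ t, γ t ∈ X)
    (hγbox : ∀ t m, xmin m ≤ γ t m ∧ γ t m ≤ xmax m)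
    (Q : Fin K → ℕ → ℝ) (Z : Fin L → ℕ → ℝ) (H : Fin M → ℕ → ℝ)
    (hQ0 : ∀ k, 0 ≤ Q k 0) (hZ0 : ∀ l, 0 ≤ Z l 0)
    (hQ : ∀ k t, Q k (t + 1) = max (Q k t - bhat k (α t) (ω t)) 0 + ahat k (α t) (ω t))
    (hZ : ∀ l t, Z l (t + 1) = max (Z l t + yhat l (α t) (ω t) + g l (γ t)) 0)
    (hH : ∀ m t, H m (t + 1) = H m t + γ t m - xhat m (α t) (ω t))
    -- the Lyapunov function
    (Ly : ℕ → ℝ)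
    (hLy : ∀ t, Ly t = (1 / 2) * ∑ l, (Z l t) ^ 2 + (1 / 2) * ∑ k, (Q k t) ^ 2
        + (1 / 2) * ∑ m, (H m t) ^ 2)
    -- the interval, the C-approximate property on it, and alternative decisions
    (t₀ T : ℕ) (hT : 1 < T)
    (hCapprox : ∀ τ ∈ Finset.Ico t₀ (t₀ + T), ∀ (a' : Act) (γ' : Fin M → ℝ),
      a' ∈ A (ω τ) → γ' ∈ X → (∀ m, xmin m ≤ γ' m ∧ γ' m ≤ xmax m) →
      driftExpr ahat bhat xhat y0hat yhat g f V (ω τ)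
          (fun l => Z l τ) (fun k => Q k τ) (fun m => H m τ) (α τ) (γ τ)
        ≤ driftExpr ahat bhat xhat y0hat yhat g f V (ω τ)
          (fun l => Z l τ) (fun k => Q k τ) (fun m => H m τ) a' γ' + C)
    (αs : ℕ → Act) (γs : ℕ → Fin M → ℝ)
    (hαs : ∀ τ ∈ Finset.Ico t₀ (t₀ + T), αs τ ∈ A (ω τ))
    (hγsX : ∀ τ ∈ Finset.Ico t₀ (t₀ + T), γs τ ∈ X)
    (hγsbox : ∀ τ ∈ Finset.Ico t₀ (t₀ + T), ∀ m, xmin m ≤ γs τ m ∧ γs τ m ≤ xmax m) :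
    Ly (t₀ + T) - Ly t₀
      + ∑ τ ∈ Finset.Ico t₀ (t₀ + T), (V * y0hat (α τ) (ω τ) + V * f (γ τ))
    ≤ B * T + C * T + D * T * ((T : ℝ) - 1)
      + ∑ τ ∈ Finset.Ico t₀ (t₀ + T), (V * y0hat (αs τ) (ω τ) + V * f (γs τ))
      + ∑ l, Z l t₀ * ∑ τ ∈ Finset.Ico t₀ (t₀ + T),
          (yhat l (αs τ) (ω τ) + g l (γs τ))
      + ∑ k, Q k t₀ * ∑ τ ∈ Finset.Ico t₀ (t₀ + T),
          (ahat k (αs τ) (ω τ) - bhat k (αs τ) (ω τ))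
      + ∑ m, H m t₀ * ∑ τ ∈ Finset.Ico t₀ (t₀ + T),
          (γs τ m - xhat m (αs τ) (ω τ)) := by
  exact stmt_6_general hA1a hA1b hA1x hA1y hgbd hB hD hα hγX hγbox hQ0 hZ0 hQ hZ hH hLy hCapprox
    hαs hγsX hγsbox
end
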